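/- Let p ∈ (0,2) and let γ_p(t) = ∫_ℝ e^{-|z|^p} e^{-itz} dz. Then: (i) γ_p is positive and the function t ↦ log γ_p(√t) is convex on (0,∞); (ii) equivalently, the function t ↦ γ_p'(t)/(t γ_p(t)) is increasing on (0,∞); and (iii) for all natural numbers k < m and every t > 0, γ_p(t/√k)^k · γ_p(0)^{m-k} ≥ γ_p(t/√m)^m. -/

import Mathlib

open scoped Real

noncomputable section

/-- `γ_p`, the Fourier transform of `z ↦ exp(-|z|^p)` on `ℝ` (a real even function). -/
def gammaP (p t : ℝ) : ℝ :=
  ∫ z : ℝ, Real.exp (-|z| ^ p) * Real.cos (t * z)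

/-!
For `α = p / 2 ≤ 1` the generating function `x ↦ 1 - (1 - x) ^ α` has nonnegative coefficients, so
the same holds for its powers, and `(1 - (1 - exp (-u / n ^ (1 / α))) ^ α) ^ n → exp (-u ^ α)`.
With `u = z ^ 2`, this exhibits `z ↦ exp (-|z| ^ p)` as a mixture of Gaussians.

The Fourier transform of the Gaussian `z ↦ exp (-s * z ^ 2)` is a multiple of
`t ↦ exp (-t ^ 2 / (4 * s))`, which is log-affine in `t ^ 2`. Log-convexity is preserved by
sums, by Hölder's inequality, and by pointwise limits, so `t ↦ γ_p(√t)` is log-convex. The other two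
claims are the monotonicity of the derivative of `log γ_p(√t)`, and log-convexity between `0` and
`t ^ 2 / k`.
-/

open MeasureTheory Filter Topology Set

section LogConvex

lemma rpow_mul_rpow_add_rpow_mul_rpow_le {a b x₁ y₁ x₂ y₂ : ℝ} (ha : 0 < a) (hb : 0 < b)
    (hab : a + b = 1) (hx₁ : 0 ≤ x₁) (hy₁ : 0 ≤ y₁) (hx₂ : 0 ≤ x₂) (hy₂ : 0 ≤ y₂) :
    x₁ ^ a * y₁ ^ b + x₂ ^ a * y₂ ^ b ≤ (x₁ + x₂) ^ a * (y₁ + y₂) ^ b := by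
  have holder := Real.inner_le_Lp_mul_Lq_of_nonneg Finset.univ
    (Real.holderConjugate_one_div ha hb hab) (f := ![x₁ ^ a, x₂ ^ a]) (g := ![y₁ ^ b, y₂ ^ b])
    (by simp [Fin.forall_fin_two, Real.rpow_nonneg, hx₁, hx₂])
    (by simp [Fin.forall_fin_two, Real.rpow_nonneg, hy₁, hy₂])
  simpa [Fin.sum_univ_two, Real.rpow_rpow_inv, hx₁, hx₂, hy₁, hy₂, ha.ne', hb.ne'] using holder

variable {E : Type*} [AddCommMonoid E] [Module ℝ E]

/-- Log-convexity of a nonnegative function. The multiplicative form of the inequality, unlike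
convexity of `log φ`, is meaningful where `φ` vanishes and passes to pointwise limits. -/
structure LogConvexOn (s : Set E) (φ : E → ℝ) : Prop where
  convex : Convex ℝ s
  nonneg : ∀ ⦃x⦄, x ∈ s → 0 ≤ φ x
  map_combo_le : ∀ ⦃x⦄, x ∈ s → ∀ ⦃y⦄, y ∈ s → ∀ ⦃a b : ℝ⦄, 0 < a → 0 < b → a + b = 1 →
    φ (a • x + b • y) ≤ φ x ^ a * φ y ^ b

namespace LogConvexOn

variable {s : Set E} {φ ψ : E → ℝ}

lemma exp_comp {g : E → ℝ} (hg : ConvexOn ℝ s g) : LogConvexOn s (fun x => Real.exp (g x)) where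
  convex := hg.1
  nonneg _ _ := (Real.exp_pos _).le
  map_combo_le x hx y hy a b ha hb hab := by
    rw [← Real.exp_mul, ← Real.exp_mul, ← Real.exp_add, Real.exp_le_exp]
    simpa only [smul_eq_mul, mul_comm] using hg.2 hx hy ha.le hb.le hab

lemma const_mul (hφ : LogConvexOn s φ) {c : ℝ} (hc : 0 ≤ c) :
    LogConvexOn s (fun x => c * φ x) where
  convex := hφ.convex
  nonneg _ hx := mul_nonneg hc (hφ.nonneg hx)
  map_combo_le x hx y hy _ _ ha hb hab := by
    rw [Real.mul_rpow hc (hφ.nonneg hx), Real.mul_rpow hc (hφ.nonneg hy), mul_mul_mul_comm,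
      ← Real.rpow_add_of_nonneg hc ha.le hb.le, hab, Real.rpow_one]
    exact mul_le_mul_of_nonneg_left (hφ.map_combo_le hx hy ha hb hab) hc

lemma add (hφ : LogConvexOn s φ) (hψ : LogConvexOn s ψ) :
    LogConvexOn s (fun x => φ x + ψ x) where
  convex := hφ.convex
  nonneg _ hx := add_nonneg (hφ.nonneg hx) (hψ.nonneg hx)
  map_combo_le _ hx _ hy _ _ ha hb hab :=
    (add_le_add (hφ.map_combo_le hx hy ha hb hab) (hψ.map_combo_le hx hy ha hb hab)).trans
      (rpow_mul_rpow_add_rpow_mul_rpow_le ha hb hab (hφ.nonneg hx) (hφ.nonneg hy)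
        (hψ.nonneg hx) (hψ.nonneg hy))

lemma of_tendsto {ι : Type*} {l : Filter ι} [l.NeBot] {Φ : ι → E → ℝ}
    (hΦ : ∀ i, LogConvexOn s (Φ i))
    (hlim : ∀ x ∈ s, Tendsto (fun i => Φ i x) l (𝓝 (φ x))) : LogConvexOn s φ := by
  obtain ⟨i₀⟩ := l.nonempty_of_neBot
  refine ⟨(hΦ i₀).convex, fun x hx => ge_of_tendsto' (hlim x hx) fun i => (hΦ i).nonneg hx,
    fun x hx y hy a b ha hb hab => ?_⟩
  exact le_of_tendsto_of_tendsto' (hlim _ ((hΦ i₀).convex hx hy ha.le hb.le hab))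
    (((hlim x hx).rpow_const (Or.inr ha.le)).mul ((hlim y hy).rpow_const (Or.inr hb.le)))
    fun i => (hΦ i).map_combo_le hx hy ha hb hab

lemma pos [TopologicalSpace E] [ContinuousAdd E] [ContinuousSMul ℝ E] (hφ : LogConvexOn s φ)
    {x y : E} (hcont : ContinuousWithinAt φ s x) (hx : x ∈ s) (hφx : 0 < φ x) (hy : y ∈ s) :
    0 < φ y := by
  -- A zero at `y` would spread over the open segment from `x` to `y`, hence to `x`.
  refine (hφ.nonneg hy).lt_of_ne' fun hφy => hφx.ne' ?_
  have segment_mem : ∀ b ∈ Ioo (0 : ℝ) 1, (1 - b) • x + b • y ∈ s := fun b hb =>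
    hφ.convex hx hy (sub_pos.2 hb.2).le hb.1.le (sub_add_cancel 1 b)
  have segment_zero : ∀ b ∈ Ioo (0 : ℝ) 1, φ ((1 - b) • x + b • y) = 0 := by
    intro b hb
    have hle := hφ.map_combo_le hx hy (sub_pos.2 hb.2) hb.1 (sub_add_cancel 1 b)
    rw [hφy, Real.zero_rpow hb.1.ne', mul_zero] at hle
    exact hle.antisymm (hφ.nonneg (segment_mem b hb))
  have path_tendsto : Tendsto (fun b : ℝ => (1 - b) • x + b • y) (𝓝[>] 0) (𝓝[s] x) := by
    have hpath : Continuous fun b : ℝ => (1 - b) • x + b • y := by fun_prop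
    refine tendsto_nhdsWithin_iff.2 ⟨?_, ?_⟩
    · simpa using (hpath.tendsto 0).mono_left nhdsWithin_le_nhds
    · exact eventually_of_mem (Ioo_mem_nhdsGT zero_lt_one) segment_mem
  have zero_tendsto : Tendsto (fun b : ℝ => φ ((1 - b) • x + b • y)) (𝓝[>] 0) (𝓝 0) :=
    tendsto_const_nhds.congr' (eventually_of_mem (Ioo_mem_nhdsGT zero_lt_one)
      fun b hb => (segment_zero b hb).symm)
  exact tendsto_nhds_unique (hcont.tendsto.comp path_tendsto) zero_tendsto

lemma convexOn_log (hφ : LogConvexOn s φ) (hpos : ∀ x ∈ s, 0 < φ x) :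
    ConvexOn ℝ s (fun x => Real.log (φ x)) := by
  refine convexOn_iff_forall_pos.2 ⟨hφ.convex, fun x hx y hy a b ha hb hab => ?_⟩
  have hmem := hφ.convex hx hy ha.le hb.le hab
  have hlog := Real.log_le_log (hpos _ hmem) (hφ.map_combo_le hx hy ha hb hab)
  rwa [Real.log_mul (Real.rpow_pos_of_pos (hpos x hx) a).ne'
    (Real.rpow_pos_of_pos (hpos y hy) b).ne', Real.log_rpow (hpos x hx),
    Real.log_rpow (hpos y hy)] at hlog

lemma map_div_pow_le {φ : ℝ → ℝ} (hφ : LogConvexOn (Ici 0) φ) {k m : ℕ} (hk : 0 < k) (hkm : k ≤ m)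
    {x : ℝ} (hx : 0 ≤ x) : φ (x / m) ^ m ≤ φ (x / k) ^ k * φ 0 ^ (m - k) := by
  obtain rfl | hlt := hkm.eq_or_lt
  · simp
  have hk' : (0 : ℝ) < k := Nat.cast_pos.2 hk
  have hm' : (0 : ℝ) < m := Nat.cast_pos.2 (hk.trans hlt)
  have hmk : (0 : ℝ) < (m - k : ℕ) := Nat.cast_pos.2 (Nat.sub_pos_of_lt hlt)
  have hxk : x / k ∈ Ici (0 : ℝ) := div_nonneg hx hk'.le
  have hcombo : (k / m : ℝ) • (x / k) + ((m - k : ℕ) / m : ℝ) • (0 : ℝ) = x / m := by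
    rw [smul_zero, add_zero, smul_eq_mul]
    field_simp
  have hle := hφ.map_combo_le hxk self_mem_Ici (div_pos hk' hm') (div_pos hmk hm')
    (by rw [Nat.cast_sub hkm]; field_simp; ring)
  rw [hcombo] at hle
  calc φ (x / m) ^ m
      ≤ (φ (x / k) ^ (k / m : ℝ) * φ 0 ^ ((m - k : ℕ) / m : ℝ)) ^ m :=
        pow_le_pow_left₀ (hφ.nonneg (div_nonneg hx hm'.le)) hle m
    _ = φ (x / k) ^ k * φ 0 ^ (m - k) := by
        rw [mul_pow, ← Real.rpow_mul_natCast (hφ.nonneg hxk),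
          ← Real.rpow_mul_natCast (hφ.nonneg self_mem_Ici), div_mul_cancel₀ _ hm'.ne',
          div_mul_cancel₀ _ hm'.ne', Real.rpow_natCast, Real.rpow_natCast]

end LogConvexOn

end LogConvex

lemma monotoneOn_deriv_div_of_convexOn_log_comp_sqrt {g : ℝ → ℝ}
    (hg : ∀ t ∈ Ioi (0 : ℝ), DifferentiableAt ℝ g t) (hpos : ∀ t ∈ Ioi (0 : ℝ), 0 < g t)
    (hconv : ConvexOn ℝ (Ioi 0) (fun t => Real.log (g (√t)))) :
    MonotoneOn (fun t => deriv g t / (t * g t)) (Ioi 0) := by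
  have hderiv : ∀ t ∈ Ioi (0 : ℝ), HasDerivAt (fun u => Real.log (g (√u)))
      (deriv g t / (t * g t) / 2) (t ^ 2) := by
    intro t ht
    have hsqrt : √(t ^ 2) = t := Real.sqrt_sq (le_of_lt ht)
    have hcomp : HasDerivAt (fun u => g (√u)) (deriv g t * (1 / (2 * t))) (t ^ 2) := by
      have h := Real.hasDerivAt_sqrt (pow_pos ht 2).ne'
      rw [hsqrt] at h
      exact (hg t ht).hasDerivAt.comp_of_eq (t ^ 2) h hsqrt.symm
    convert hcomp.log (by rw [hsqrt]; exact (hpos t ht).ne') using 1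
    rw [hsqrt]
    field_simp
  have hdiff : ∀ u ∈ Ioi (0 : ℝ), DifferentiableAt ℝ (fun u => Real.log (g (√u))) u := by
    intro u hu
    have h := (hderiv (√u) (Real.sqrt_pos.2 hu)).differentiableAt
    rwa [Real.sq_sqrt (le_of_lt hu)] at h
  intro s hs t ht hst
  have hmono := hconv.monotoneOn_deriv hdiff (mem_Ioi.2 (pow_pos hs 2))
    (mem_Ioi.2 (pow_pos ht 2)) (pow_le_pow_left₀ (le_of_lt hs) hst 2)
  rw [(hderiv s hs).deriv, (hderiv t ht).deriv] at hmono
  exact (div_le_div_iff_of_pos_right two_pos).1 hmono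

section CosTransform

/-- The cosine transform, which is the Fourier transform of `f` when `f` is even; `gammaP p` is the
cosine transform of `z ↦ exp (-|z| ^ p)`. -/
def cosTransform (f : ℝ → ℝ) (t : ℝ) : ℝ :=
  ∫ z : ℝ, f z * Real.cos (t * z)

variable {f g : ℝ → ℝ}

lemma norm_mul_cos_le (a θ : ℝ) : ‖a * Real.cos θ‖ ≤ ‖a‖ := by
  rw [norm_mul]
  exact mul_le_of_le_one_right (norm_nonneg a) (Real.abs_cos_le_one θ)

lemma integrable_mul_cos (hf : Integrable f) (t : ℝ) :
    Integrable (fun z => f z * Real.cos (t * z)) :=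
  hf.mono (hf.aestronglyMeasurable.mul (by fun_prop))
    (Eventually.of_forall fun z => norm_mul_cos_le (f z) (t * z))

lemma cosTransform_add (hf : Integrable f) (hg : Integrable g) (t : ℝ) :
    cosTransform (fun z => f z + g z) t = cosTransform f t + cosTransform g t := by
  simp only [cosTransform, add_mul]
  exact integral_add (integrable_mul_cos hf t) (integrable_mul_cos hg t)

lemma cosTransform_const_mul (c : ℝ) (f : ℝ → ℝ) (t : ℝ) :
    cosTransform (fun z => c * f z) t = c * cosTransform f t := by
  simp only [cosTransform, mul_assoc]
  exact integral_const_mul c _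

lemma cosTransform_zero (f : ℝ → ℝ) : cosTransform f 0 = ∫ z, f z := by
  simp [cosTransform]

lemma cosTransform_abs (f : ℝ → ℝ) (t : ℝ) : cosTransform f |t| = cosTransform f t := by
  rcases abs_choice t with h | h <;> simp [h, cosTransform]

lemma tendsto_cosTransform {F : ℕ → ℝ → ℝ} (hmeas : ∀ n, AEStronglyMeasurable (F n))
    (hg : Integrable g) (hbound : ∀ n z, ‖F n z‖ ≤ g z)
    (hlim : ∀ z, Tendsto (fun n => F n z) atTop (𝓝 (f z))) (t : ℝ) :
    Tendsto (fun n => cosTransform (F n) t) atTop (𝓝 (cosTransform f t)) :=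
  tendsto_integral_of_dominated_convergence g (fun n => (hmeas n).mul (by fun_prop)) hg
    (fun n => Eventually.of_forall fun z => (norm_mul_cos_le _ _).trans (hbound n z))
    (Eventually.of_forall fun z => (hlim z).mul_const _)

lemma continuous_cosTransform (hf : Integrable f) : Continuous (cosTransform f) :=
  continuous_of_dominated (fun t => (integrable_mul_cos hf t).aestronglyMeasurable)
    (fun t => Eventually.of_forall fun z => norm_mul_cos_le (f z) (t * z)) hf.norm
    (Eventually.of_forall fun z => by fun_prop)

lemma differentiable_cosTransform (hf : Integrable f) (hf' : Integrable (fun z => z * f z)) :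
    Differentiable ℝ (cosTransform f) := by
  intro t
  refine (hasDerivAt_integral_of_dominated_loc_of_deriv_le (x₀ := t)
    (F' := fun t z => f z * (-Real.sin (t * z) * z)) (bound := fun z => ‖z * f z‖) univ_mem
    (Eventually.of_forall fun t => (integrable_mul_cos hf t).aestronglyMeasurable)
    (integrable_mul_cos hf t) (hf.aestronglyMeasurable.mul (by fun_prop))
    (Eventually.of_forall fun z t _ => ?_) hf'.norm
    (Eventually.of_forall fun z t _ => ?_)).2.differentiableAt
  · rw [norm_mul, norm_mul, norm_mul, norm_neg, mul_comm ‖z‖]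
    gcongr
    exact mul_le_of_le_one_left (norm_nonneg z) (Real.abs_sin_le_one _)
  · exact (hasDerivAt_mul_const z).cos.const_mul (f z)

lemma cosTransform_gaussian {s : ℝ} (hs : 0 < s) (t : ℝ) :
    cosTransform (fun z => Real.exp (-s * z ^ 2)) t = √(π / s) * Real.exp (-t ^ 2 / (4 * s)) := by
  have hs' : 0 < (s : ℂ).re := hs
  have hint : Integrable fun z : ℝ =>
      Complex.exp (Complex.I * t * z) * Complex.exp (-(s : ℂ) * z ^ 2) := by
    refine (integrable_cexp_quadratic hs' (Complex.I * t) 0).congr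
      (Eventually.of_forall fun z => ?_)
    simp only [← Complex.exp_add]
    ring_nf
  have hre : ∀ z : ℝ, Real.exp (-s * z ^ 2) * Real.cos (t * z)
      = (Complex.exp (Complex.I * t * z) * Complex.exp (-(s : ℂ) * z ^ 2)).re := by
    intro z
    have hexp : Complex.exp (-(s : ℂ) * z ^ 2) = (Real.exp (-s * z ^ 2) : ℝ) := by push_cast; rfl
    have hrot : Complex.I * t * z = (t * z : ℝ) * Complex.I := by push_cast; ring
    rw [hexp, hrot, Complex.re_mul_ofReal, Complex.exp_ofReal_mul_I_re, mul_comm]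
  have hvalue : (π / s : ℂ) ^ (1 / 2 : ℂ) * Complex.exp (-(t : ℂ) ^ 2 / (4 * s))
      = (√(π / s) * Real.exp (-t ^ 2 / (4 * s)) : ℝ) := by
    rw [Real.sqrt_eq_rpow, Complex.ofReal_mul, Complex.ofReal_cpow (by positivity)]
    push_cast
    rfl
  calc cosTransform (fun z => Real.exp (-s * z ^ 2)) t
      = (∫ z : ℝ, Complex.exp (Complex.I * t * z) * Complex.exp (-(s : ℂ) * z ^ 2)).re := by
        rw [cosTransform, integral_congr_ae (Eventually.of_forall hre)]
        exact integral_re hint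
    _ = √(π / s) * Real.exp (-t ^ 2 / (4 * s)) := by
        rw [fourierIntegral_gaussian hs', hvalue, Complex.ofReal_re]

lemma logConvexOn_cosTransform_gaussian {s : ℝ} (hs : 0 < s) :
    LogConvexOn (Ici 0) (fun t => cosTransform (fun z => Real.exp (-s * z ^ 2)) (√t)) := by
  have hlinear : ConvexOn ℝ (Ici 0) (fun t : ℝ => -(√t) ^ 2 / (4 * s)) :=
    ((LinearMap.mul ℝ ℝ (-1 / (4 * s))).convexOn (convex_Ici 0)).congr fun t ht => by
      rw [Real.sq_sqrt ht, LinearMap.mul_apply_apply]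
      ring
  simp only [cosTransform_gaussian hs]
  exact (LogConvexOn.exp_comp hlinear).const_mul (Real.sqrt_nonneg _)

end CosTransform

section GaussianMixture

/-- The smallest convex cone of functions on `ℝ` that contains the Gaussians `z ↦ exp(-s z²)`,
constant included, and is closed under pointwise limits of sequences. It stands for the Laplace
transforms of finite measures on `[0, ∞)`, evaluated at `z²`. -/
inductive IsGaussianMixture : (ℝ → ℝ) → Prop
  | gaussian {s : ℝ} (hs : 0 ≤ s) : IsGaussianMixture (fun z => Real.exp (-s * z ^ 2))
  | const_mul {c : ℝ} {f : ℝ → ℝ} (hc : 0 ≤ c) (hf : IsGaussianMixture f) :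
      IsGaussianMixture (fun z => c * f z)
  | add {f g : ℝ → ℝ} (hf : IsGaussianMixture f) (hg : IsGaussianMixture g) :
      IsGaussianMixture (fun z => f z + g z)
  | of_tendsto {F : ℕ → ℝ → ℝ} {f : ℝ → ℝ} (hF : ∀ n, IsGaussianMixture (F n))
      (hlim : ∀ z, Tendsto (fun n => F n z) atTop (𝓝 (f z))) : IsGaussianMixture f

namespace IsGaussianMixture

variable {f g : ℝ → ℝ}

lemma measurable (hf : IsGaussianMixture f) : Measurable f := by
  induction hf with
  | gaussian _ => fun_prop
  | const_mul _ _ ih => exact ih.const_mul _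
  | add _ _ ihf ihg => exact ihf.add ihg
  | of_tendsto _ hlim ih => exact measurable_of_tendsto_metrizable ih (tendsto_pi_nhds.2 hlim)

lemma nonneg (hf : IsGaussianMixture f) (z : ℝ) : 0 ≤ f z := by
  induction hf with
  | gaussian _ => exact (Real.exp_pos _).le
  | const_mul hc _ ih => exact mul_nonneg hc ih
  | add _ _ ihf ihg => exact add_nonneg ihf ihg
  | of_tendsto _ hlim ih => exact ge_of_tendsto' (hlim z) ih

lemma le_apply_zero (hf : IsGaussianMixture f) (z : ℝ) : f z ≤ f 0 := by
  induction hf with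
  | gaussian hs =>
    refine Real.exp_le_exp.2 ?_
    nlinarith [mul_nonneg hs (sq_nonneg z)]
  | const_mul hc _ ih => exact mul_le_mul_of_nonneg_left ih hc
  | add _ _ ihf ihg => exact add_le_add ihf ihg
  | of_tendsto _ hlim ih => exact le_of_tendsto_of_tendsto' (hlim z) (hlim 0) ih

lemma gaussian_mul {s : ℝ} (hs : 0 ≤ s) (hf : IsGaussianMixture f) :
    IsGaussianMixture (fun z => Real.exp (-s * z ^ 2) * f z) := by
  induction hf with
  | gaussian hr =>
    simpa only [← Real.exp_add, ← add_mul, ← neg_add] using gaussian (add_nonneg hs hr)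
  | const_mul hc _ ih => simpa only [mul_left_comm] using ih.const_mul hc
  | add _ _ ihf ihg => simpa only [mul_add] using ihf.add ihg
  | of_tendsto _ hlim ih => exact of_tendsto ih fun z => (hlim z).const_mul _

lemma mul (hf : IsGaussianMixture f) (hg : IsGaussianMixture g) :
    IsGaussianMixture (fun z => f z * g z) := by
  induction hf with
  | gaussian hs => exact hg.gaussian_mul hs
  | const_mul hc _ ih => simpa only [mul_assoc] using ih.const_mul hc
  | add _ _ ihf ihg => simpa only [add_mul] using ihf.add ihg
  | of_tendsto _ hlim ih => exact of_tendsto ih fun z => (hlim z).mul_const _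

lemma one : IsGaussianMixture (fun _ => 1) := by
  simpa only [neg_zero, zero_mul, Real.exp_zero] using gaussian le_rfl

lemma zero : IsGaussianMixture (fun _ => 0) := by
  simpa only [zero_mul] using one.const_mul le_rfl

lemma pow (hf : IsGaussianMixture f) (n : ℕ) : IsGaussianMixture (fun z => f z ^ n) := by
  induction n with
  | zero => simpa only [pow_zero] using one
  | succ n ih => simpa only [pow_succ] using ih.mul hf

lemma sum {ι : Type*} {F : ι → ℝ → ℝ} (hF : ∀ i, IsGaussianMixture (F i)) (S : Finset ι) :
    IsGaussianMixture (fun z => ∑ i ∈ S, F i z) := by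
  classical
  induction S using Finset.induction_on with
  | empty => simpa only [Finset.sum_empty] using zero
  | insert i S hi ih => simpa only [Finset.sum_insert hi] using (hF i).add ih

lemma of_hasSum {F : ℕ → ℝ → ℝ} (hF : ∀ n, IsGaussianMixture (F n))
    (hsum : ∀ z, HasSum (fun n => F n z) (f z)) : IsGaussianMixture f :=
  of_tendsto (fun N => sum hF (Finset.range N)) fun z => (hsum z).tendsto_sum_nat

lemma integrable_mul_gaussian (hf : IsGaussianMixture f) {δ : ℝ} (hδ : 0 < δ) :
    Integrable (fun z => f z * Real.exp (-δ * z ^ 2)) :=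
  (integrable_exp_neg_mul_sq hδ).bdd_mul hf.measurable.aestronglyMeasurable
    (Eventually.of_forall fun z => by
      rw [Real.norm_of_nonneg (hf.nonneg z)]
      exact hf.le_apply_zero z)

lemma logConvexOn_cosTransform_mul_gaussian (hf : IsGaussianMixture f) {δ : ℝ} (hδ : 0 < δ) :
    LogConvexOn (Ici 0)
      (fun t => cosTransform (fun z => f z * Real.exp (-δ * z ^ 2)) (√t)) := by
  induction hf with
  | gaussian hs =>
    simpa only [← Real.exp_add, ← add_mul, ← neg_add] using
      logConvexOn_cosTransform_gaussian (add_pos_of_nonneg_of_pos hs hδ)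
  | const_mul hc _ ih => simpa only [mul_assoc, cosTransform_const_mul] using ih.const_mul hc
  | add hf hg ihf ihg =>
    simpa only [add_mul, cosTransform_add (hf.integrable_mul_gaussian hδ)
      (hg.integrable_mul_gaussian hδ)] using ihf.add ihg
  | @of_tendsto F f hF hlim ih =>
    obtain ⟨C, hC⟩ := (hlim 0).bddAbove_range
    refine LogConvexOn.of_tendsto ih fun t _ => tendsto_cosTransform
      (fun n => ((hF n).integrable_mul_gaussian hδ).aestronglyMeasurable)
      ((integrable_exp_neg_mul_sq hδ).const_mul C) (fun n z => ?_)
      (fun z => (hlim z).mul_const _) _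
    rw [norm_mul, Real.norm_of_nonneg ((hF n).nonneg z), Real.norm_of_nonneg (Real.exp_pos _).le]
    gcongr
    exact ((hF n).le_apply_zero z).trans (hC (mem_range_self n))

lemma logConvexOn_cosTransform (hf : IsGaussianMixture f) (hint : Integrable f) :
    LogConvexOn (Ici 0) (fun t => cosTransform f (√t)) := by
  refine LogConvexOn.of_tendsto (l := atTop)
    (fun n : ℕ => hf.logConvexOn_cosTransform_mul_gaussian (Nat.one_div_pos_of_nat (n := n)))
    fun t _ => tendsto_cosTransform
      (fun n => (hf.integrable_mul_gaussian Nat.one_div_pos_of_nat).aestronglyMeasurable)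
      hint.norm (fun n z => ?_) (fun z => ?_) _
  · rw [norm_mul, Real.norm_of_nonneg (Real.exp_pos _).le]
    refine mul_le_of_le_one_right (norm_nonneg _) (Real.exp_le_one_iff.2 ?_)
    rw [neg_mul, neg_nonpos]
    positivity
  · have hdamping : Tendsto (fun δ : ℝ => f z * Real.exp (-δ * z ^ 2)) (𝓝 0) (𝓝 (f z)) := by
      have hcont : Continuous fun δ : ℝ => f z * Real.exp (-δ * z ^ 2) := by fun_prop
      simpa using hcont.tendsto 0
    exact hdamping.comp tendsto_one_div_add_atTop_nhds_zero_nat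

lemma cosTransform_pos (hf : IsGaussianMixture f) (hint : Integrable f) (hmass : 0 < ∫ z, f z)
    (t : ℝ) : 0 < cosTransform f t := by
  have hcont : Continuous (fun u => cosTransform f (√u)) :=
    (continuous_cosTransform hint).comp Real.continuous_sqrt
  have hpos : 0 < cosTransform f √(t ^ 2) :=
    (hf.logConvexOn_cosTransform hint).pos hcont.continuousWithinAt self_mem_Ici
      (by rwa [Real.sqrt_zero, cosTransform_zero]) (sq_nonneg t)
  rwa [Real.sqrt_sq_eq_abs, cosTransform_abs] at hpos

end IsGaussianMixture

end GaussianMixture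

section Stable

/-- The mass at `k + 1` of the Sibuya distribution with exponent `α`, whose generating function is
`x ↦ 1 - (1 - x) ^ α`. -/
def sibuyaMass (α : ℝ) (k : ℕ) : ℝ :=
  (-1) ^ k * Ring.choose α (k + 1)

variable {α : ℝ}

lemma sibuyaMass_zero (α : ℝ) : sibuyaMass α 0 = α := by
  simp [sibuyaMass]

lemma sibuyaMass_succ (α : ℝ) (k : ℕ) :
    sibuyaMass α (k + 1) = sibuyaMass α k * ((k + 1 - α) / (k + 2)) := by
  have hchoose : (k + 2) * Ring.choose α (k + 2) = Ring.choose α (k + 1) * (α - (k + 1)) := by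
    have h := Ring.choose_smul_choose α (Nat.le_add_right (k + 1) 1)
    rw [Nat.add_sub_cancel_left, Ring.choose_one_right, Nat.choose_succ_self_right,
      nsmul_eq_mul] at h
    push_cast at h
    linear_combination h
  simp only [sibuyaMass]
  field_simp
  linear_combination (-1) ^ (k + 1) * hchoose

lemma sibuyaMass_nonneg (hα₀ : 0 ≤ α) (hα₁ : α ≤ 1) (k : ℕ) : 0 ≤ sibuyaMass α k := by
  induction k with
  | zero => rwa [sibuyaMass_zero]
  | succ k ih =>
    rw [sibuyaMass_succ]
    have hk : α ≤ k + 1 := hα₁.trans (le_add_of_nonneg_left k.cast_nonneg)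
    exact mul_nonneg ih (div_nonneg (sub_nonneg.2 hk) (by positivity))

lemma hasSum_sibuyaMass_mul_pow (α : ℝ) {x : ℝ} (hx : |x| < 1) :
    HasSum (fun k => sibuyaMass α k * x ^ (k + 1)) (1 - (1 - x) ^ α) := by
  have hbinom := (Real.one_add_rpow_hasFPowerSeriesOnBall_zero (a := α)).hasSum (y := -x)
    (by simpa [← ofReal_norm] using hx)
  simp only [zero_add, binomialSeries_apply, List.ofFn_const, List.prod_replicate,
    smul_eq_mul] at hbinom
  have hterm : (fun k => sibuyaMass α k * x ^ (k + 1))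
      = fun k => -(Ring.choose α (k + 1) * (-x) ^ (k + 1)) := by
    funext k
    rw [sibuyaMass, neg_pow x]
    ring
  rw [hterm]
  simpa [← sub_eq_add_neg] using ((hasSum_nat_add_iff' 1).2 hbinom).neg

lemma IsGaussianMixture.one_sub_one_sub_rpow {f : ℝ → ℝ} (hf : IsGaussianMixture f)
    (hf₁ : f 0 < 1) (hα₀ : 0 ≤ α) (hα₁ : α ≤ 1) :
    IsGaussianMixture (fun z => 1 - (1 - f z) ^ α) :=
  of_hasSum (fun k => (hf.pow (k + 1)).const_mul (sibuyaMass_nonneg hα₀ hα₁ k)) fun z =>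
    hasSum_sibuyaMass_mul_pow α
      (by rw [abs_of_nonneg (hf.nonneg z)]; exact (hf.le_apply_zero z).trans_lt hf₁)

lemma tendsto_mul_one_sub_exp_neg_div (x : ℝ) :
    Tendsto (fun r : ℝ => r * (1 - Real.exp (-(x / r)))) atTop (𝓝 x) := by
  have hderiv : HasDerivAt (fun u : ℝ => 1 - Real.exp (-(x * u))) x 0 := by
    simpa using (((hasDerivAt_id (0 : ℝ)).const_mul x).neg.exp).const_sub 1
  refine (hderiv.tendsto_slope_zero_right.comp tendsto_inv_atTop_nhdsGT_zero).congr fun r => ?_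
  simp [div_eq_mul_inv]

/-- Sums of `n` independent Sibuya variables, rescaled by `n ^ (1 / α)`, converge to the one-sided
`α`-stable law; this is the convergence of their Laplace transforms. -/
lemma tendsto_sibuya_pow (hα : 0 < α) {x : ℝ} (hx : 0 ≤ x) :
    Tendsto (fun n : ℕ => (1 - (1 - Real.exp (-(x / (n : ℝ) ^ α⁻¹))) ^ α) ^ n) atTop
      (𝓝 (Real.exp (-x ^ α))) := by
  have hscale : Tendsto (fun n : ℕ => (n : ℝ) ^ α⁻¹) atTop atTop :=
    (tendsto_rpow_atTop (inv_pos.2 hα)).comp tendsto_natCast_atTop_atTop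
  have hlim := ((tendsto_mul_one_sub_exp_neg_div x).comp hscale).rpow_const (Or.inr hα.le)
  simp only [sub_eq_add_neg (1 : ℝ) (_ ^ α)]
  refine Real.tendsto_one_add_pow_exp_of_tendsto (hlim.neg.congr fun n => ?_)
  have hexp : 0 ≤ 1 - Real.exp (-(x / (n : ℝ) ^ α⁻¹)) :=
    sub_nonneg.2 (Real.exp_le_one_iff.2 (neg_nonpos.2 (by positivity)))
  rw [Function.comp_apply, Real.mul_rpow (by positivity) hexp,
    Real.rpow_inv_rpow n.cast_nonneg hα.ne', mul_neg]

lemma isGaussianMixture_exp_neg_sq_add_rpow (hα₀ : 0 < α) (hα₁ : α ≤ 1) {ε : ℝ} (hε : 0 < ε) :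
    IsGaussianMixture (fun z => Real.exp (-(z ^ 2 + ε) ^ α)) := by
  have hexp {r : ℝ} (hr : 0 < r) :
      IsGaussianMixture (fun z => Real.exp (-((z ^ 2 + ε) / r))) := by
    convert (IsGaussianMixture.gaussian (inv_nonneg.2 hr.le)).const_mul
      (Real.exp_pos (-(ε / r))).le using 2 with z
    rw [← Real.exp_add]
    ring_nf
  refine .of_tendsto (fun n => ?_) fun z =>
    (tendsto_sibuya_pow hα₀ (x := z ^ 2 + ε) (by positivity)).comp (tendsto_add_atTop_nat 1)
  have hr : 0 < ((n + 1 : ℕ) : ℝ) ^ α⁻¹ := by positivity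
  refine ((hexp hr).one_sub_one_sub_rpow ?_ hα₀.le hα₁).pow (n + 1)
  rw [Real.exp_lt_one_iff, neg_lt_zero]
  positivity

lemma isGaussianMixture_exp_neg_abs_rpow {p : ℝ} (hp₀ : 0 < p) (hp₂ : p ≤ 2) :
    IsGaussianMixture (fun z => Real.exp (-|z| ^ p)) := by
  have hα : 0 < p / 2 := half_pos hp₀
  refine .of_tendsto (fun n : ℕ => isGaussianMixture_exp_neg_sq_add_rpow hα
    (by linarith) (Nat.one_div_pos_of_nat (n := n))) fun z => ?_
  have hcont : Continuous fun ε : ℝ => Real.exp (-(z ^ 2 + ε) ^ (p / 2)) :=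
    Real.continuous_exp.comp ((continuous_const.add continuous_id).rpow_const
      fun _ => Or.inr hα.le).neg
  have hpow : (z ^ 2) ^ (p / 2) = |z| ^ p := by
    rw [← sq_abs, ← Real.rpow_natCast_mul (abs_nonneg z), Nat.cast_two,
      mul_div_cancel₀ p two_ne_zero]
  have hlim := hcont.tendsto 0
  rw [add_zero, hpow] at hlim
  exact hlim.comp tendsto_one_div_add_atTop_nhds_zero_nat

lemma integrable_abs_rpow_mul_exp_neg_abs_rpow {p q : ℝ} (hp : 0 < p) (hq : -1 < q) :
    Integrable (fun z : ℝ => |z| ^ q * Real.exp (-|z| ^ p)) := by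
  simpa using (integrable_fun_norm_addHaar (volume : Measure ℝ)
    (f := fun r => r ^ q * Real.exp (-r ^ p))).2
    (by simpa using integrableOn_rpow_mul_exp_neg_rpow hq hp)

lemma integrable_exp_neg_abs_rpow {p : ℝ} (hp : 0 < p) :
    Integrable (fun z : ℝ => Real.exp (-|z| ^ p)) := by
  simpa using integrable_abs_rpow_mul_exp_neg_abs_rpow hp neg_one_lt_zero

lemma logConvexOn_gammaP_sqrt {p : ℝ} (hp₀ : 0 < p) (hp₂ : p ≤ 2) :
    LogConvexOn (Ici 0) (fun t => gammaP p (√t)) :=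
  (isGaussianMixture_exp_neg_abs_rpow hp₀ hp₂).logConvexOn_cosTransform
    (integrable_exp_neg_abs_rpow hp₀)

lemma gammaP_pos {p : ℝ} (hp₀ : 0 < p) (hp₂ : p ≤ 2) (t : ℝ) : 0 < gammaP p t :=
  (isGaussianMixture_exp_neg_abs_rpow hp₀ hp₂).cosTransform_pos (integrable_exp_neg_abs_rpow hp₀)
    (integral_exp_pos (integrable_exp_neg_abs_rpow hp₀)) t

lemma differentiable_gammaP {p : ℝ} (hp : 0 < p) : Differentiable ℝ (gammaP p) := by
  refine differentiable_cosTransform (integrable_exp_neg_abs_rpow hp) ?_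
  refine (integrable_abs_rpow_mul_exp_neg_abs_rpow hp (q := 1) (by norm_num)).mono
    (Measurable.aestronglyMeasurable (by fun_prop)) (Eventually.of_forall fun z => ?_)
  simp

end Stable

theorem statement17_general (p : ℝ) (hp₀ : 0 < p) (hp₂ : p ≤ 2) :
    (∀ t, 0 < gammaP p t)
    ∧ ConvexOn ℝ (Ici 0) (fun t => Real.log (gammaP p (√t)))
    ∧ MonotoneOn (fun t => deriv (gammaP p) t / (t * gammaP p t)) (Ioi 0)
    ∧ (∀ k m : ℕ, 0 < k → k ≤ m → ∀ t : ℝ, 0 ≤ t →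
        gammaP p (t / √m) ^ m ≤ gammaP p (t / √k) ^ k * gammaP p 0 ^ (m - k)) := by
  have hlog := logConvexOn_gammaP_sqrt hp₀ hp₂
  have hpos := gammaP_pos hp₀ hp₂
  have hconv := hlog.convexOn_log fun _ _ => hpos _
  refine ⟨hpos, hconv, ?_, fun k m hk hkm t ht => ?_⟩
  · exact monotoneOn_deriv_div_of_convexOn_log_comp_sqrt
      (fun t _ => differentiable_gammaP hp₀ t) (fun t _ => hpos t)
      (hconv.subset Ioi_subset_Ici_self (convex_Ioi 0))
  · simpa only [Real.sqrt_div (sq_nonneg t), Real.sqrt_sq ht, Real.sqrt_zero] using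
      hlog.map_div_pow_le hk hkm (sq_nonneg t)

/-- Lemma 7: for `p ∈ (0,2)`: (i) `γ_p` is positive and
`t ↦ log γ_p(√t)` is convex on `(0,∞)`; (ii) `t ↦ γ_p'(t)/(t γ_p(t))` is increasing on
`(0,∞)`; (iii) for naturals `k < m` and `t > 0`,
`γ_p(t/√k)^k γ_p(0)^{m-k} ≥ γ_p(t/√m)^m`. -/
theorem statement17 (p : ℝ) (hp1 : 0 < p) (hp2 : p < 2) :
    (∀ t, 0 < gammaP p t)
    ∧ ConvexOn ℝ (Set.Ioi 0) (fun t => Real.log (gammaP p (Real.sqrt t)))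
    ∧ MonotoneOn (fun t => deriv (gammaP p) t / (t * gammaP p t)) (Set.Ioi 0)
    ∧ (∀ k m : ℕ, 0 < k → k < m → ∀ t : ℝ, 0 < t →
        gammaP p (t / Real.sqrt m) ^ m
          ≤ gammaP p (t / Real.sqrt k) ^ k * gammaP p 0 ^ (m - k)) := by
  obtain ⟨hpos, hconv, hmono, hpow⟩ := statement17_general p hp1 hp2.le
  exact ⟨hpos, hconv.subset Ioi_subset_Ici_self (convex_Ioi 0), hmono,
    fun k m hk hkm t ht => hpow k m hk hkm.le t ht.le⟩

end
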